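/- Let K ⊆ ℝ² be a two-dimensional convex body such that for some δ' > 0 one has K ∩ B°(c_K,δ') ⊆ ⋃_{x ∈ K ∩ bd(B(c_K,R(K)))} (K + (c_K − x)). Then there exist at most 12 points x_1,…,x_k ∈ K ∩ bd(B(c_K,R(K))) (k ≤ 12) and δ > 0 such that B°(c_K,δ) ⊆ ⋃_{i=1}^k (K + (c_K − x_i)). -/

import Mathlib

open Metric Set
open scoped RealInnerProductSpace

/-- The quantified t-illumination number `i(K,ε)`: the least `m` for which there exist
unit vectors `r_1, …, r_m` such that every `x ∈ K` satisfies `x + ε • r_i ∈ K` for some `i`;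
`∞` if no finite such family exists. -/
noncomputable def iq {n : ℕ} (K : Set (EuclideanSpace ℝ (Fin n))) (ε : ℝ) : ℕ∞ :=
  sInf {m : ℕ∞ | ∃ s : Finset (EuclideanSpace ℝ (Fin n)), (s.card : ℕ∞) = m ∧
    (∀ r ∈ s, ‖r‖ = 1) ∧ ∀ x ∈ K, ∃ r ∈ s, x + ε • r ∈ K}

/-- The quantified illumination number `c(K,ε)`: the least `m` for which there exist
unit vectors `r_1, …, r_m` such that every `x ∈ K` satisfies `x + ε • r_i ∈ int K` for some `i`;
`∞` if no finite such family exists. -/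
noncomputable def cq {n : ℕ} (K : Set (EuclideanSpace ℝ (Fin n))) (ε : ℝ) : ℕ∞ :=
  sInf {m : ℕ∞ | ∃ s : Finset (EuclideanSpace ℝ (Fin n)), (s.card : ℕ∞) = m ∧
    (∀ r ∈ s, ‖r‖ = 1) ∧ ∀ x ∈ K, ∃ r ∈ s, x + ε • r ∈ interior K}

/-- `B(c, R)` is the circumball of `K`: a closed ball containing `K` of minimal radius. -/
def IsCircumball {n : ℕ} (K : Set (EuclideanSpace ℝ (Fin n)))
    (c : EuclideanSpace ℝ (Fin n)) (R : ℝ) : Prop :=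
  K ⊆ closedBall c R ∧ ∀ (c' : EuclideanSpace ℝ (Fin n)) (R' : ℝ), K ⊆ closedBall c' R' → R ≤ R'

abbrev E2 := EuclideanSpace ℝ (Fin 2)

def det2 (u v : E2) : ℝ := u 0 * v 1 - u 1 * v 0

def GG (K : Set E2) (x v : E2) : Prop := ∃ η : ℝ, 0 < η ∧ x + η • v ∈ K

def pp (d d' : E2) (s : ℝ) : E2 := (1 - s) • d + s • d'

lemma cramer2 (u v y : E2) (h : det2 u v ≠ 0) :
    y = (det2 y v / det2 u v) • u + (det2 u y / det2 u v) • v := by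
  have h' : u 0 * v 1 - u 1 * v 0 ≠ 0 := h
  ext i
  fin_cases i <;> simp only [det2, PiLp.add_apply, PiLp.smul_apply, smul_eq_mul,
    div_mul_eq_mul_div, ← add_div] <;> rw [eq_div_iff h'] <;> simp <;> ring

lemma div_pos_of_mul {a b : ℝ} (h : 0 < a * b) : 0 < a / b := by
  rcases pos_and_pos_or_neg_and_neg_of_mul_pos h with h | h
  · exact div_pos h.1 h.2
  · exact div_pos_of_neg_of_neg h.1 h.2

lemma GG_comb {K : Set E2} (hK : Convex ℝ K) {x u v : E2} (hx : x ∈ K)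
    (hu : GG K x u) (hv : GG K x v) {a b : ℝ} (ha : 0 ≤ a) (hb : 0 ≤ b) :
    GG K x (a • u + b • v) := by
  obtain ⟨e, he, heu⟩ := hu
  obtain ⟨f, hf, hfv⟩ := hv
  have hpos : 0 < a / e + b / f + 1 := by positivity
  refine ⟨1 / (a / e + b / f + 1), by positivity, ?_⟩
  have h3 := hK.sum_mem (t := Finset.univ)
    (w := ![1 / (a / e + b / f + 1), (a/e) / (a / e + b / f + 1), (b/f) / (a / e + b / f + 1)])
    (z := ![x, x + e • u, x + f • v])
    (by intro i _; fin_cases i <;> simp <;> positivity)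
    (by simp [Fin.sum_univ_three]; field_simp; ring)
    (by intro i _; fin_cases i <;> simp [*])
  convert h3 using 1
  simp only [Fin.sum_univ_three]
  ext i
  simp
  field_simp
  ring

lemma mono_mem {K : Set E2} (hK : Convex ℝ K) {x v : E2} (hx : x ∈ K) {e f : ℝ}
    (hf : 0 ≤ f) (hfe : f ≤ e) (h : x + e • v ∈ K) : x + f • v ∈ K := by
  rcases eq_or_lt_of_le hf with rfl | hf
  · simpa using hx
  have he : 0 < e := lt_of_lt_of_le hf hfe
  have := hK hx h (a := 1 - f / e) (b := f / e) (by rw [sub_nonneg, div_le_one he]; exact hfe)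
    (by positivity) (by ring)
  convert this using 1
  ext i
  simp
  field_simp
  ring

lemma GG_range {K : Set E2} (hK : Convex ℝ K) {x d d' : E2} (hx : x ∈ K) {a b : ℝ}
    (ha : GG K x (pp d d' a)) (hb : GG K x (pp d d' b)) :
    ∃ δ : ℝ, 0 < δ ∧ ∀ s ∈ Icc a b, x + δ • pp d d' s ∈ K := by
  obtain ⟨e, he, heu⟩ := ha
  obtain ⟨f, hf, hfv⟩ := hb
  refine ⟨min e f, lt_min he hf, ?_⟩
  have h1 := mono_mem hK hx (le_min he.le hf.le) (min_le_left e f) heu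
  have h2 := mono_mem hK hx (le_min he.le hf.le) (min_le_right e f) hfv
  rintro s ⟨hs1, hs2⟩
  rcases eq_or_lt_of_le (hs1.trans hs2) with hab | hab
  · have : s = a := by linarith
    rw [this]; exact h1
  have hba : 0 < b - a := by linarith
  have := hK h1 h2 (a := (b - s) / (b - a)) (b := (s - a) / (b - a))
    (div_nonneg (by linarith) hba.le) (div_nonneg (by linarith) hba.le) (by field_simp; ring)
  convert this using 1
  ext i
  simp [pp]
  have : b - a ≠ 0 := hba.ne'
  field_simp
  ring

lemma det2_pp (d d' : E2) (s s' : ℝ) :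
    det2 (pp d d' s) (pp d d' s') = (s' - s) * det2 d d' := by
  simp [det2, pp]; ring

lemma continuous_det2 : Continuous fun q : E2 × E2 => det2 q.1 q.2 := by
  unfold det2; fun_prop

lemma tendsto_det2 {f g : ℕ → E2} {a b : E2} (hf : Filter.Tendsto f Filter.atTop (nhds a))
    (hg : Filter.Tendsto g Filter.atTop (nhds b)) :
    Filter.Tendsto (fun n => det2 (f n) (g n)) Filter.atTop (nhds (det2 a b)) :=
  (continuous_det2.tendsto (a, b)).comp (hf.prodMk_nhds hg)

lemma continuous_pp (d d' : E2) : Continuous (pp d d') := by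
  unfold pp; fun_prop

lemma pp_zero (d d' : E2) : pp d d' 0 = d := by simp [pp]
lemma pp_one (d d' : E2) : pp d d' 1 = d' := by simp [pp]
lemma pp_symm (d d' : E2) (s : ℝ) : pp d' d (1 - s) = pp d d' s := by
  simp [pp, add_comm]

lemma pp_ne {d d' : E2} (h : det2 d d' ≠ 0) (s : ℝ) : pp d d' s ≠ 0 := by
  intro h0
  have h1 := det2_pp d d' s 0
  have h2 := det2_pp d d' s 1
  rw [h0] at h1 h2
  have e1 : det2 0 (pp d d' 0) = 0 := by simp [det2]
  have e2 : det2 0 (pp d d' 1) = 0 := by simp [det2]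
  apply h
  linarith

lemma side {K S : Set E2} (hKc : IsCompact K) (hK : Convex ℝ K) (hS : IsCompact S) (hSK : S ⊆ K)
    (C : Set E2)
    (N : ∀ u : E2, u ≠ 0 → ∀ x, ∃ z ∈ K, det2 u (z - x) ≠ 0) {d d' : E2} (hD : det2 d d' ≠ 0)
    {t : ℝ} (ht : 0 < t)
    (H : ∀ x ∈ S, ∀ s ∈ Icc (0:ℝ) 1, x + t • pp d d' s ∈ K → x ∈ C ∨ GG K x d ∨ GG K x d')
    (hSne : S.Nonempty) :
    ∃ y ∈ S, ∃ δ > (0:ℝ),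
      (∀ s ∈ Icc (0:ℝ) 1, (∃ x ∈ S, x + t • pp d d' s ∈ K ∧ GG K x d) →
        y + δ • pp d d' s ∈ K ∨ ∃ x ∈ C, x ∈ S ∧ x + δ • pp d d' s ∈ K) ∨
      (∃ z ∈ S, ∀ s ∈ Icc (0:ℝ) 1, y + δ • pp d d' s ∈ K ∨ z + δ • pp d d' s ∈ K) := by
  set A : Set ℝ := {s | s ∈ Icc (0:ℝ) 1 ∧ ∃ x ∈ S, x + t • pp d d' s ∈ K ∧ GG K x d} with hA
  rcases A.eq_empty_or_nonempty with hem | hne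
  · obtain ⟨y, hy⟩ := hSne
    refine ⟨y, hy, 1, one_pos, Or.inl ?_⟩
    intro s hs hx
    have : s ∈ A := ⟨hs, hx⟩
    rw [hem] at this
    exact this.elim
  have hbdd : BddAbove A := ⟨1, fun s hs => hs.1.2⟩
  obtain ⟨σ, -, hσt, hσ⟩ := exists_seq_tendsto_sSup hne hbdd
  set m := sSup A with hm
  choose hσI ξ hξS hξK hξG using hσ
  obtain ⟨X, hXS, φ, hφ, hφt⟩ := hS.tendsto_subseq hξS
  have hσφ : Filter.Tendsto (σ ∘ φ) Filter.atTop (nhds m) := hσt.comp hφ.tendsto_atTop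
  have hmI : m ∈ Icc (0:ℝ) 1 := isClosed_Icc.mem_of_tendsto hσφ (Filter.Eventually.of_forall fun n => hσI _)
  have hXK : X + t • pp d d' m ∈ K := by
    refine hKc.isClosed.mem_of_tendsto (hφt.add ((((continuous_pp d d').tendsto m).comp hσφ).const_smul t))
      (Filter.Eventually.of_forall fun n => hξK _)
  have hle : ∀ s ∈ A, s ≤ m := fun s hs => le_csSup hbdd hs
  obtain ⟨z, hzK, hz⟩ := N (pp d d' m) (pp_ne hD m) X
  have hz' : ∀ x ∈ K, GG K x (z - x) := fun x _ => ⟨1, one_pos, by simpa using hzK⟩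
  -- the point covers everything
  have easy : ∀ y ∈ S, GG K y d → GG K y (pp d d' m) → ∃ y ∈ S, ∃ δ > (0:ℝ),
      (∀ s ∈ Icc (0:ℝ) 1, (∃ x ∈ S, x + t • pp d d' s ∈ K ∧ GG K x d) →
        y + δ • pp d d' s ∈ K ∨ ∃ x ∈ C, x ∈ S ∧ x + δ • pp d d' s ∈ K) ∨
      (∃ z ∈ S, ∀ s ∈ Icc (0:ℝ) 1, y + δ • pp d d' s ∈ K ∨ z + δ • pp d d' s ∈ K) := by
    intro y hy h1 h2
    obtain ⟨δ, hδ, hc⟩ := GG_range (d := d) (d' := d') (a := 0) (b := m) hK (hSK hy)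
      (by rwa [pp_zero]) h2
    exact ⟨y, hy, δ, hδ, Or.inl fun s hs hx => Or.inl (hc s ⟨hs.1, hle s ⟨hs, hx⟩⟩)⟩
  rcases lt_or_gt_of_ne (mul_ne_zero hz hD) with hneg | hpos
  · by_cases hGX : GG K X d
    · exact easy X hXS hGX ⟨t, ht, hXK⟩
    have hm0 : 0 < m := by
      rcases eq_or_lt_of_le hmI.1 with h | h
      · exact absurd ⟨t, ht, by rw [← h, pp_zero] at hXK; exact hXK⟩ hGX
      · exact h
    -- find s0
    have hev : ∀ᶠ s in nhds m, 0 < det2 (pp d d' s) (z - X) * det2 (pp d d' m) (z - X) := by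
      have hc : Continuous fun s => det2 (pp d d' s) (z - X) * det2 (pp d d' m) (z - X) := by
        have := continuous_det2.comp ((continuous_pp d d').prodMk (continuous_const (y := z - X)))
        exact this.mul continuous_const
      exact (hc.tendsto m).eventually_const_lt (by simpa using mul_self_pos.2 hz)
    obtain ⟨ε, hε, hball⟩ := Metric.eventually_nhds_iff.1 hev
    obtain ⟨s0, hs0, hs0m⟩ : ∃ s0, max 0 (m - ε) < s0 ∧ s0 < m :=
      exists_between (max_lt hm0 (by linarith))
    have hs00 := lt_of_le_of_lt (le_max_left _ _) hs0
    have hs01 := lt_of_le_of_lt (le_max_right _ _) hs0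
    have hpos0 := hball (y := s0) (by rw [Real.dist_eq, abs_lt]; constructor <;> linarith)
    have hG0 : GG K X (pp d d' s0) := by
      rw [cramer2 _ _ (pp d d' s0) hz]
      refine GG_comb hK (hSK hXS) ⟨t, ht, hXK⟩ (hz' X (hSK hXS)) ?_ ?_
      · exact (div_pos_of_mul hpos0).le
      · rw [det2_pp, div_nonneg_iff]
        rcases lt_or_gt_of_ne hz with h | h
        · right; exact ⟨by nlinarith [pos_of_mul_neg_right hneg h.le], h.le⟩
        · left; exact ⟨by nlinarith [neg_of_mul_neg_right hneg h.le], h.le⟩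
    obtain ⟨n, hn⟩ := (hσφ.eventually_const_lt hs0m).exists
    simp only [Function.comp] at hn
    obtain ⟨δ1, hδ1, hc1⟩ := GG_range (d := d) (d' := d') (a := 0) (b := σ (φ n)) hK
      (hSK (hξS (φ n))) (by rw [pp_zero]; exact hξG _) ⟨t, ht, hξK _⟩
    by_cases hXC : X ∈ C
    · obtain ⟨δ2, hδ2, hc2⟩ := GG_range (d := d) (d' := d') (a := s0) (b := m) hK
        (hSK hXS) hG0 ⟨t, ht, hXK⟩
      refine ⟨ξ (φ n), hξS _, min δ1 δ2, lt_min hδ1 hδ2, Or.inl fun s hs hx => ?_⟩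
      rcases le_total s (σ (φ n)) with h | h
      · exact Or.inl (mono_mem hK (hSK (hξS _)) (lt_min hδ1 hδ2).le (min_le_left _ _) (hc1 s ⟨hs.1, h⟩))
      · exact Or.inr ⟨X, hXC, hXS, mono_mem hK (hSK hXS) (lt_min hδ1 hδ2).le (min_le_right _ _)
          (hc2 s ⟨by linarith, hle s ⟨hs, hx⟩⟩)⟩
    · have hG' : GG K X d' := by
        rcases H X hXS m hmI hXK with h | h | h
        · exact absurd h hXC
        · exact absurd h hGX
        · exact h
      obtain ⟨δ2, hδ2, hc2⟩ := GG_range (d := d) (d' := d') (a := s0) (b := 1) hK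
        (hSK hXS) hG0 (by rwa [pp_one])
      refine ⟨ξ (φ n), hξS _, min δ1 δ2, lt_min hδ1 hδ2, Or.inr ⟨X, hXS, fun s hs => ?_⟩⟩
      rcases le_total s (σ (φ n)) with h | h
      · exact Or.inl (mono_mem hK (hSK (hξS _)) (lt_min hδ1 hδ2).le (min_le_left _ _) (hc1 s ⟨hs.1, h⟩))
      · exact Or.inr (mono_mem hK (hSK hXS) (lt_min hδ1 hδ2).le (min_le_right _ _)
          (hc2 s ⟨by linarith, hs.2⟩))
  · have P1 : Filter.Tendsto (fun n => pp d d' (σ (φ n))) Filter.atTop (nhds (pp d d' m)) :=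
      ((continuous_pp d d').tendsto m).comp hσφ
    have P2 : Filter.Tendsto (fun n => z - ξ (φ n)) Filter.atTop (nhds (z - X)) :=
      hφt.const_sub z
    have T1 := tendsto_det2 P1 P2
    have T2 := tendsto_det2 (tendsto_const_nhds (x := pp d d' m)) P2
    obtain ⟨n, hn1, hn2⟩ := (((T1.mul T2).eventually_const_lt (mul_self_pos.2 hz)).and
      ((T1.mul_const (det2 d d')).eventually_const_lt hpos)).exists
    have hne : det2 (pp d d' (σ (φ n))) (z - ξ (φ n)) ≠ 0 := by
      intro h; rw [h] at hn2; simp at hn2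
    refine easy (ξ (φ n)) (hξS _) (hξG _) ?_
    rw [cramer2 _ _ (pp d d' m) hne]
    refine GG_comb hK (hSK (hξS _)) ⟨t, ht, hξK _⟩ (hz' _ (hSK (hξS _))) ?_ ?_
    · exact (div_pos_of_mul (by linarith)).le
    · have hmn : σ (φ n) ≤ m := hle _ ⟨hσI _, ξ _, hξS _, hξK _, hξG _⟩
      rw [det2_pp, div_nonneg_iff]
      rcases lt_or_gt_of_ne hne with h | h
      · right; exact ⟨by nlinarith [neg_of_mul_pos_right hn2 h.le], h.le⟩
      · left; exact ⟨by nlinarith [pos_of_mul_pos_right hn2 h.le], h.le⟩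

lemma quad {K S : Set E2} (hKc : IsCompact K) (hK : Convex ℝ K) (hS : IsCompact S) (hSK : S ⊆ K)
    (C : Set E2)
    (N : ∀ u : E2, u ≠ 0 → ∀ x, ∃ z ∈ K, det2 u (z - x) ≠ 0) {d d' : E2} (hD : det2 d d' ≠ 0)
    {t : ℝ} (ht : 0 < t)
    (H : ∀ x ∈ S, ∀ s ∈ Icc (0:ℝ) 1, x + t • pp d d' s ∈ K → x ∈ C ∨ GG K x d ∨ GG K x d')
    (hcov : ∀ s ∈ Icc (0:ℝ) 1, ∃ x ∈ S, x + t • pp d d' s ∈ K)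
    (hSne : S.Nonempty) :
    ∃ y ∈ S, ∃ z ∈ S, ∃ δ > (0:ℝ), ∀ s ∈ Icc (0:ℝ) 1, y + δ • pp d d' s ∈ K ∨ z + δ • pp d d' s ∈ K ∨
      ∃ x ∈ C, x ∈ S ∧ x + δ • pp d d' s ∈ K := by
  have hD' : det2 d' d ≠ 0 := by
    intro h; apply hD; simp only [det2] at h ⊢; linarith
  obtain ⟨y, hy, δ1, hδ1, h1⟩ := side hKc hK hS hSK C N hD ht H hSne
  obtain ⟨y', hy', δ2, hδ2, h2⟩ := side hKc hK hS hSK C N hD' ht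
    (by
      intro x hx s hs h
      have := H x hx (1 - s) ⟨by linarith [hs.2], by linarith [hs.1]⟩ (by rwa [pp_symm])
      tauto) hSne
  rcases h1 with h1 | ⟨z, hz, h1⟩
  swap
  · exact ⟨y, hy, z, hz, δ1, hδ1, fun s hs => by have := h1 s hs; tauto⟩
  rcases h2 with h2 | ⟨z, hz, h2⟩
  swap
  · refine ⟨y', hy', z, hz, δ2, hδ2, fun s hs => ?_⟩
    have := h2 (1 - s) ⟨by linarith [hs.2], by linarith [hs.1]⟩
    rw [pp_symm] at this
    tauto
  have hmin : 0 < min (min δ1 δ2) t := lt_min (lt_min hδ1 hδ2) ht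
  have l1 : min (min δ1 δ2) t ≤ δ1 := (min_le_left _ _).trans (min_le_left _ _)
  have l2 : min (min δ1 δ2) t ≤ δ2 := (min_le_left _ _).trans (min_le_right _ _)
  have l3 : min (min δ1 δ2) t ≤ t := min_le_right _ _
  refine ⟨y, hy, y', hy', min (min δ1 δ2) t, hmin, fun s hs => ?_⟩
  obtain ⟨x, hx, hxK⟩ := hcov s hs
  rcases H x hx s hs hxK with h | h | h
  · exact Or.inr (Or.inr ⟨x, h, hx, mono_mem hK (hSK hx) hmin.le l3 hxK⟩)
  · rcases h1 s hs ⟨x, hx, hxK, h⟩ with h | ⟨w, hwC, hw, h⟩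
    · exact Or.inl (mono_mem hK (hSK hy) hmin.le l1 h)
    · exact Or.inr (Or.inr ⟨w, hwC, hw, mono_mem hK (hSK hw) hmin.le l1 h⟩)
  · have := h2 (1 - s) ⟨by linarith [hs.2], by linarith [hs.1]⟩
    rw [pp_symm] at this
    rcases this ⟨x, hx, hxK, h⟩ with h | ⟨w, hwC, hw, h⟩
    · exact Or.inr (Or.inl (mono_mem hK (hSK hy') hmin.le l2 h))
    · exact Or.inr (Or.inr ⟨w, hwC, hw, mono_mem hK (hSK hw) hmin.le l2 h⟩)

lemma normsq2 (x : E2) : ‖x‖ ^ 2 = x 0 ^ 2 + x 1 ^ 2 := by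
  simp [EuclideanSpace.norm_sq_eq, Fin.sum_univ_two]

lemma normeq2 {x : E2} {R : ℝ} (h : ‖x‖ = R) : x 0 ^ 2 + x 1 ^ 2 = R ^ 2 := by
  rw [← normsq2, h]

lemma eq_of_sq_zero {u v : E2} (h : (u 0 - v 0) ^ 2 + (u 1 - v 1) ^ 2 ≤ 0) : u = v := by
  ext i
  fin_cases i
  · show u 0 = v 0
    nlinarith [sq_nonneg (u 0 - v 0), sq_nonneg (u 1 - v 1)]
  · show u 1 = v 1
    nlinarith [sq_nonneg (u 0 - v 0), sq_nonneg (u 1 - v 1)]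

lemma nondeg {K : Set E2} (hKint : (interior K).Nonempty) :
    ∀ u : E2, u ≠ 0 → ∀ x, ∃ z ∈ K, det2 u (z - x) ≠ 0 := by
  intro u hu x
  obtain ⟨z0, hz0⟩ := hKint
  by_cases h : det2 u (z0 - x) ≠ 0
  · exact ⟨z0, interior_subset hz0, h⟩
  push Not at h
  have hc : Filter.Tendsto (fun e : ℝ => z0 + e • (!₂[-u 1, u 0] : E2)) (nhds 0) (nhds z0) := by
    have : Continuous (fun e : ℝ => z0 + e • (!₂[-u 1, u 0] : E2)) := by fun_prop
    simpa using this.tendsto 0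
  have hev := hc.eventually (mem_interior_iff_mem_nhds.1 hz0)
  obtain ⟨ε, hε, hball⟩ := Metric.eventually_nhds_iff.1 hev
  have := hball (y := ε / 2) (by rw [Real.dist_eq, sub_zero, abs_of_pos (by linarith)]; linarith)
  refine ⟨_, this, ?_⟩
  have hu2 : 0 < u 0 ^ 2 + u 1 ^ 2 := by
    rw [← normsq2]; have := norm_pos_iff.2 hu; positivity
  simp only [det2, PiLp.sub_apply] at h
  have : det2 u (z0 + (ε / 2) • (!₂[-u 1, u 0] : E2) - x) = ε / 2 * (u 0 ^ 2 + u 1 ^ 2) := by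
    simp [det2]; linarith
  rw [this]; positivity

lemma par2 {u v : E2} {R : ℝ} (hu : ‖u‖ = R) (hv : ‖v‖ = R) (h : det2 u v = 0) :
    u = v ∨ v = -u := by
  have h1 := normeq2 hu
  have h2 := normeq2 hv
  simp only [det2] at h
  have : (u 0 * v 0 + u 1 * v 1 - R ^ 2) * (u 0 * v 0 + u 1 * v 1 + R ^ 2) = 0 := by
    have : (u 0 * v 0 + u 1 * v 1) ^ 2 + (u 0 * v 1 - u 1 * v 0) ^ 2 = R ^ 2 * R ^ 2 := by
      nth_rewrite 1 [← h1]; rw [← h2]; ring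
    rw [h] at this; linarith
  rcases mul_eq_zero.1 this with h | h
  · left; apply eq_of_sq_zero; nlinarith
  · right; apply eq_of_sq_zero; simp; nlinarith

lemma chord {x y z : E2} {R : ℝ} (hx : ‖x‖ = R) (hy : ‖y‖ = R) (hz : ‖z‖ = R) (hyx : y ≠ x)
    (hzx : z ≠ x) (h : (y 0 - x 0) * (z 0 - x 0) + (y 1 - x 1) * (z 1 - x 1) ≤ 0) :
    det2 (y - x) (z - x) ≠ 0 := by
  intro hd
  have h1 := normeq2 hx
  have h2 := normeq2 hy
  have h3 := normeq2 hz
  simp only [det2, PiLp.sub_apply] at hd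
  obtain ⟨v0, hv0⟩ : ∃ v0, v0 = y 0 - x 0 := ⟨_, rfl⟩
  obtain ⟨v1, hv1⟩ : ∃ v1, v1 = y 1 - x 1 := ⟨_, rfl⟩
  obtain ⟨w0, hw0⟩ : ∃ w0, w0 = z 0 - x 0 := ⟨_, rfl⟩
  obtain ⟨w1, hw1⟩ : ∃ w1, w1 = z 1 - x 1 := ⟨_, rfl⟩
  rw [← hv0, ← hv1, ← hw0, ← hw1] at h hd
  have hvp : 0 < v0 ^ 2 + v1 ^ 2 := by
    by_contra hn
    exact hyx (eq_of_sq_zero (by rw [← hv0, ← hv1]; linarith))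
  have e1 : 2 * (x 0 * v0 + x 1 * v1) + (v0 ^ 2 + v1 ^ 2) = 0 := by
    rw [hv0, hv1]; linarith
  have e2 : 2 * (x 0 * w0 + x 1 * w1) + (w0 ^ 2 + w1 ^ 2) = 0 := by
    rw [hw0, hw1]; linarith
  have f0 : (v0 ^ 2 + v1 ^ 2) * w0 = (v0 * w0 + v1 * w1) * v0 := by linear_combination (-v1) * hd
  have f1 : (v0 ^ 2 + v1 ^ 2) * w1 = (v0 * w0 + v1 * w1) * v1 := by linear_combination v0 * hd
  have g : (v0 ^ 2 + v1 ^ 2) * (w0 ^ 2 + w1 ^ 2) = (v0 ^ 2 + v1 ^ 2) * (v0 * w0 + v1 * w1) := by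
    linear_combination (v0 ^ 2 + v1 ^ 2) * e2 - 2 * x 0 * f0 - 2 * x 1 * f1 - (v0 * w0 + v1 * w1) * e1
  have := mul_left_cancel₀ hvp.ne' g
  exact hzx (eq_of_sq_zero (by rw [← hw0, ← hw1]; linarith))

abbrev ea : E2 := !₂[1, 0]
abbrev eb : E2 := !₂[0, 1]

lemma GG_of_smul {K : Set E2} {x e : E2} {c : ℝ} (hc : c ≠ 0) (h : GG K x (c • e)) :
    GG K x e ∨ GG K x (-e) := by
  obtain ⟨η, hη, h⟩ := h
  rcases lt_or_gt_of_ne hc with hc | hc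
  · right
    refine ⟨η * (-c), mul_pos hη (by linarith), ?_⟩
    convert h using 2
    rw [smul_smul]; simp
  · left
    exact ⟨η * c, mul_pos hη hc, by rwa [mul_smul]⟩

lemma axis_dir {K : Set E2} (hK : Convex ℝ K) {x v w : E2} (hx : x ∈ K) (hv : GG K x v)
    (hw : GG K x w) (h : v 0 * w 0 + v 1 * w 1 ≤ 0) (hd : det2 v w ≠ 0) :
    (GG K x ea ∨ GG K x (-ea)) ∨ (GG K x eb ∨ GG K x (-eb)) := by
  have key : v 0 * w 0 ≤ 0 ∨ v 1 * w 1 ≤ 0 := by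
    by_contra! hn; linarith
  rcases key with h | h
  · right
    rcases mul_nonpos_iff.1 h with ⟨h1, h2⟩ | ⟨h1, h2⟩
    · apply GG_of_smul hd
      convert GG_comb hK hx hv hw (neg_nonneg.2 h2) h1 using 1
      ext i; fin_cases i <;> simp [det2] <;> ring
    · apply GG_of_smul (neg_ne_zero.2 hd)
      convert GG_comb hK hx hv hw h2 (neg_nonneg.2 h1) using 1
      ext i; fin_cases i <;> simp [det2] <;> ring
  · left
    rcases mul_nonpos_iff.1 h with ⟨h1, h2⟩ | ⟨h1, h2⟩
    · apply GG_of_smul (neg_ne_zero.2 hd)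
      convert GG_comb hK hx hv hw (neg_nonneg.2 h2) h1 using 1
      ext i; fin_cases i <;> simp [det2] <;> ring
    · apply GG_of_smul hd
      convert GG_comb hK hx hv hw h2 (neg_nonneg.2 h1) using 1
      ext i; fin_cases i <;> simp [det2] <;> ring

lemma opp_dir {K : Set E2} (hK : Convex ℝ K) {x d d' : E2} (hx : x ∈ K) {s : ℝ}
    (hs : s ∈ Icc (0:ℝ) 1) (hp : GG K x (pp d d' s)) (h : GG K x (-d)) :
    GG K x d ∨ GG K x d' := by
  rcases eq_or_lt_of_le hs.1 with h0 | h0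
  · left; rwa [← h0, pp_zero] at hp
  · right
    convert GG_comb hK hx hp h (a := 1 / s) (b := (1 - s) / s) (by positivity)
      (div_nonneg (by linarith [hs.2]) h0.le) using 1
    ext i
    simp [pp]
    field_simp
    ring

lemma quad_dir {K : Set E2} (hK : Convex ℝ K) {x d d' : E2} (hx : x ∈ K) {s : ℝ}
    (hs : s ∈ Icc (0:ℝ) 1) (hp : GG K x (pp d d' s))
    (h : (GG K x d ∨ GG K x (-d)) ∨ (GG K x d' ∨ GG K x (-d'))) :
    GG K x d ∨ GG K x d' := by
  rcases h with (h | h) | (h | h)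
  · exact Or.inl h
  · exact opp_dir hK hx hs hp h
  · exact Or.inr h
  · refine (opp_dir (d := d') (d' := d) (s := 1 - s) hK hx ⟨by linarith [hs.2], by linarith [hs.1]⟩ ?_ h).symm
    rwa [pp_symm]

lemma exists_nonpos {K : Set E2} {R : ℝ} (hKc : IsCompact K) (hKne : K.Nonempty)
    (hcirc : IsCircumball K 0 R) (n : E2) :
    ∃ x ∈ K, ‖x‖ = R ∧ ⟪n, x⟫ ≤ 0 := by
  have step : ∀ ε : ℝ, ∃ y ∈ K, R ≤ ‖y - ε • n‖ := by
    intro ε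
    obtain ⟨y, hy, hmax⟩ := hKc.exists_isMaxOn hKne (f := fun y => ‖y - ε • n‖) (by fun_prop)
    refine ⟨y, hy, hcirc.2 (ε • n) _ fun z hz => ?_⟩
    rw [mem_closedBall, dist_eq_norm]
    exact hmax hz
  choose f hfK hf using fun k : ℕ => step (1 / ((k : ℝ) + 1))
  obtain ⟨X, hX, φ, hφ, hφt⟩ := hKc.tendsto_subseq hfK
  have hε : Filter.Tendsto (fun k => 1 / ((φ k : ℝ) + 1)) Filter.atTop (nhds 0) :=
    (tendsto_one_div_add_atTop_nhds_zero_nat (𝕜 := ℝ)).comp hφ.tendsto_atTop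
  have hle : ∀ y ∈ K, ‖y‖ ≤ R := fun y hy => by simpa using hcirc.1 hy
  refine ⟨X, hX, le_antisymm (hle X hX) ?_, ?_⟩
  · have := (hφt.sub (hε.smul_const n)).norm
    rw [zero_smul, sub_zero] at this
    exact ge_of_tendsto this (Filter.Eventually.of_forall fun k => hf (φ k))
  · have T1 : Filter.Tendsto (fun k => ⟪n, f (φ k)⟫) Filter.atTop (nhds ⟪n, X⟫) :=
      tendsto_const_nhds.inner hφt
    have T2 := (hε.mul_const (‖n‖ ^ 2)).div_const 2
    simp only [zero_mul, zero_div] at T2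
    refine le_of_tendsto_of_tendsto' T1 T2 fun k => ?_
    have h1 := hf (φ k)
    have h2 := hle _ (hfK (φ k))
    obtain ⟨e, he⟩ : ∃ e, e = 1 / ((φ k : ℝ) + 1) := ⟨_, rfl⟩
    have hepos : 0 < e := by rw [he]; positivity
    rw [← he] at h1 ⊢
    have h3 : ‖f (φ k)‖ ≤ ‖f (φ k) - e • n‖ := h2.trans h1
    have h4 : ‖f (φ k)‖ ^ 2 ≤ ‖f (φ k) - e • n‖ ^ 2 := by gcongr
    rw [norm_sub_sq_real, inner_smul_right, norm_smul, real_inner_comm, mul_pow,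
      Real.norm_eq_abs, sq_abs] at h4
    have h5 : e * (2 * ⟪n, f (φ k)⟫) ≤ e * (e * ‖n‖ ^ 2) := by linarith
    have := le_of_mul_le_mul_left h5 hepos
    linarith

lemma cara {S : Set E2} {y : E2} (h : y ∈ convexHull ℝ S) :
    ∃ n ≤ 3, ∃ (z : Fin n → E2) (w : Fin n → ℝ), (∀ i, z i ∈ S) ∧ Function.Injective z ∧
      (∀ i, 0 < w i) ∧ ∑ i, w i = 1 ∧ ∑ i, w i • z i = y := by
  obtain ⟨ι, hι, z, w, hz, haff, hw, hsum, hzero⟩ := eq_pos_convex_span_of_mem_convexHull h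
  have hcard : Fintype.card ι ≤ 3 := by
    have h1 := haff.card_le_finrank_succ
    have h2 := Submodule.finrank_le (vectorSpan ℝ (Set.range z))
    rw [finrank_euclideanSpace_fin] at h2
    omega
  let e := (Fintype.equivFin ι).symm
  refine ⟨Fintype.card ι, hcard, z ∘ e, w ∘ e, fun i => hz ⟨_, rfl⟩, haff.injective.comp e.injective,
    fun i => hw _, ?_, ?_⟩
  · rw [← hsum]; exact e.sum_comp w
  · rw [← hzero]; exact e.sum_comp (fun i => w i • z i)

lemma compact_hull {S : Set E2} (hS : IsCompact S) : IsCompact (convexHull ℝ S) := by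
  have hc : IsCompact ((fun q : (Fin 3 → ℝ) × (Fin 3 → E2) => ∑ i, q.1 i • q.2 i) ''
      (stdSimplex ℝ (Fin 3) ×ˢ Set.pi univ (fun _ => S))) :=
    ((isCompact_stdSimplex ℝ (Fin 3)).prod (isCompact_univ_pi fun _ => hS)).image (by fun_prop)
  convert hc using 1
  apply Set.Subset.antisymm
  · intro y hy
    obtain ⟨n, hn, z, w, hz, -, hw, hsum, hy⟩ := cara hy
    interval_cases n
    · simp at hsum
    · simp only [Fin.sum_univ_one] at hsum hy
      refine ⟨(![w 0, 0, 0], ![z 0, z 0, z 0]), ⟨⟨?_, ?_⟩, ?_⟩, ?_⟩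
      · intro i; fin_cases i <;> simp [(hw _).le]
      · simp [Fin.sum_univ_three, hsum]
      · intro i _; fin_cases i <;> simp [hz]
      · simp [Fin.sum_univ_three, hy]
    · simp only [Fin.sum_univ_two] at hsum hy
      refine ⟨(![w 0, w 1, 0], ![z 0, z 1, z 0]), ⟨⟨?_, ?_⟩, ?_⟩, ?_⟩
      · intro i; fin_cases i <;> simp [(hw _).le]
      · simp [Fin.sum_univ_three, hsum]
      · intro i _; fin_cases i <;> simp [hz]
      · simp [Fin.sum_univ_three, hy]
    · exact ⟨(w, z), ⟨⟨fun i => (hw i).le, hsum⟩, fun i _ => hz i⟩, hy⟩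
  · rintro _ ⟨⟨w, z⟩, ⟨⟨h1, h2⟩, h3⟩, rfl⟩
    exact (convex_convexHull ℝ S).sum_mem (fun i _ => h1 i) h2
      (fun i _ => subset_convexHull ℝ S (h3 i (mem_univ i)))

lemma zero_mem_hull {K : Set E2} {R : ℝ} (hKc : IsCompact K) (hKne : K.Nonempty)
    (hcirc : IsCircumball K 0 R) : (0 : E2) ∈ convexHull ℝ {x | x ∈ K ∧ ‖x‖ = R} := by
  by_contra h0
  have hSc : IsCompact {x : E2 | x ∈ K ∧ ‖x‖ = R} :=
    hKc.inter_right (isClosed_eq continuous_norm continuous_const)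
  have hcl : IsClosed (convexHull ℝ {x : E2 | x ∈ K ∧ ‖x‖ = R}) := (compact_hull hSc).isClosed
  obtain ⟨f, u, hf0, hf⟩ := geometric_hahn_banach_point_closed (convex_convexHull ℝ _) hcl h0
  obtain ⟨x, hx, hxR, hn⟩ := exists_nonpos hKc hKne hcirc ((InnerProductSpace.toDual ℝ E2).symm f)
  rw [InnerProductSpace.toDual_symm_apply] at hn
  have := hf x (subset_convexHull ℝ _ ⟨hx, hxR⟩)
  rw [map_zero] at hf0
  linarith

lemma GG_pm {K : Set E2} (hK : Convex ℝ K) {x u v : E2} (hx : x ∈ K) (h1 : GG K x u)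
    (h2 : GG K x (-u)) (h3 : GG K x v) (h4 : GG K x (-v)) (a b : ℝ) : GG K x (a • u + b • v) := by
  rcases le_total 0 a with ha | ha <;> rcases le_total 0 b with hb | hb
  · exact GG_comb hK hx h1 h3 ha hb
  · simpa using GG_comb hK hx h1 h4 ha (neg_nonneg.2 hb)
  · simpa using GG_comb hK hx h2 h3 (neg_nonneg.2 ha) hb
  · simpa using GG_comb hK hx h2 h4 (neg_nonneg.2 ha) (neg_nonneg.2 hb)

lemma pair_angle {x y z : E2} {R a b : ℝ} (hR : 0 < R) (hx : ‖x‖ = R) (hy : ‖y‖ = R) (hz : ‖z‖ = R)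
    (ha : 0 ≤ a) (hb : 0 ≤ b) (h : x = a • y + b • z) :
    (y 0 - x 0) * (z 0 - x 0) + (y 1 - x 1) * (z 1 - x 1) ≤ 0 := by
  have hab : 1 ≤ a + b := by
    have h1 : ‖x‖ ≤ ‖a • y‖ + ‖b • z‖ := by rw [h]; exact norm_add_le _ _
    rw [norm_smul, norm_smul, hx, hy, hz, Real.norm_of_nonneg ha, Real.norm_of_nonneg hb] at h1
    by_contra hn
    nlinarith
  have h1 := normeq2 hx
  have h2 := normeq2 hy
  have h3 := normeq2 hz
  have e0 : x 0 = a * y 0 + b * z 0 := by rw [h]; simp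
  have e1 : x 1 = a * y 1 + b * z 1 := by rw [h]; simp
  have key : (y 0 - x 0) * (z 0 - x 0) + (y 1 - x 1) * (z 1 - x 1)
      = (R ^ 2 + (y 0 * z 0 + y 1 * z 1)) * (1 - a - b) := by
    have : x 0 * y 0 + x 1 * y 1 = a * R ^ 2 + b * (y 0 * z 0 + y 1 * z 1) := by
      rw [e0, e1, ← h2]; ring
    have : x 0 * z 0 + x 1 * z 1 = b * R ^ 2 + a * (y 0 * z 0 + y 1 * z 1) := by
      rw [e0, e1, ← h3]; ring
    linarith
  rw [key]
  have : 0 ≤ R ^ 2 + (y 0 * z 0 + y 1 * z 1) := by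
    nlinarith [sq_nonneg (y 0 + z 0), sq_nonneg (y 1 + z 1)]
  exact mul_nonpos_of_nonneg_of_nonpos this (by linarith)

lemma cone3 {p q r : E2} {w0 w1 w2 : ℝ} (h0 : 0 < w0) (h1 : 0 < w1) (h2 : 0 < w2)
    (hs : w0 • p + w1 • q + w2 • r = 0) (hd : det2 p q ≠ 0) (y : E2) :
    ∃ a b : ℝ, 0 ≤ a ∧ 0 ≤ b ∧ (y = a • p + b • q ∨ y = a • q + b • r ∨ y = a • p + b • r) := by
  obtain ⟨α, β, hy⟩ : ∃ α β : ℝ, y = α • p + β • q := ⟨_, _, cramer2 p q y hd⟩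
  by_cases hpos : 0 ≤ α ∧ 0 ≤ β
  · exact ⟨α, β, hpos.1, hpos.2, Or.inl hy⟩
  have hs' : ∀ l : ℝ, y = (α + l * w0) • p + (β + l * w1) • q + (l * w2) • r := by
    intro l
    have : y = α • p + β • q + l • (w0 • p + w1 • q + w2 • r) := by rw [hs, hy]; simp
    rw [this]; module
  rcases le_total (-β / w1) (-α / w0) with h | h
  · have hl : 0 ≤ -α / w0 := by
      by_contra hn
      apply hpos
      have hn' : -β / w1 < 0 := by linarith
      push Not at hn
      rw [div_lt_iff₀ h0] at hn
      rw [div_lt_iff₀ h1] at hn'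
      constructor <;> linarith
    refine ⟨β + (-α / w0) * w1, (-α / w0) * w2, ?_, by positivity, Or.inr (Or.inl ?_)⟩
    · rw [div_le_iff₀ h1] at h; linarith
    · rw [hs' (-α / w0)]
      have : α + -α / w0 * w0 = 0 := by field_simp; ring
      rw [this]; simp
  · have hl : 0 ≤ -β / w1 := by
      by_contra hn
      apply hpos
      have hn' : -α / w0 < 0 := by linarith
      push Not at hn
      rw [div_lt_iff₀ h1] at hn
      rw [div_lt_iff₀ h0] at hn'
      constructor <;> linarith
    refine ⟨α + (-β / w1) * w0, (-β / w1) * w2, ?_, by positivity, Or.inr (Or.inr ?_)⟩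
    · rw [div_le_iff₀ h0] at h; linarith
    · rw [hs' (-β / w1)]
      have : β + -β / w1 * w1 = 0 := by field_simp; ring
      rw [this]; simp

open Classical in
lemma exists_C {K : Set E2} {R : ℝ} (hKc : IsCompact K) (hK : Convex ℝ K)
    (hKint : (interior K).Nonempty) (hR : 0 < R)
    (hcirc : IsCircumball K 0 R) {δ' : ℝ} (hδ' : 0 < δ')
    (hcov : ∀ y ∈ K, ‖y‖ < δ' → ∃ x, (x ∈ K ∧ ‖x‖ = R) ∧ x + y ∈ K) :
    (0 : E2) ∈ K ∧ (∀ y, GG K 0 y) ∧ ∃ C : Finset E2, C.card ≤ 3 ∧ (∀ x ∈ C, x ∈ K ∧ ‖x‖ = R) ∧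
      ∀ x : E2, ‖x‖ = R → ∃ y ∈ C, ∃ z ∈ C,
        (y 0 - x 0) * (z 0 - x 0) + (y 1 - x 1) * (z 1 - x 1) ≤ 0 := by
  have hle : ∀ y ∈ K, ‖y‖ ≤ R := fun y hy => by simpa using hcirc.1 hy
  have hull := zero_mem_hull hKc (hKint.mono interior_subset) hcirc
  have h0 : (0 : E2) ∈ K := convexHull_min (fun x hx => hx.1) hK hull
  refine ⟨h0, ?_⟩
  have GGK : ∀ x ∈ K, GG K 0 x := fun x hx => ⟨1, one_pos, by simpa using hx⟩
  obtain ⟨n, hn, z, w, hz, hinj, hw, hsum, hy⟩ := cara hull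
  interval_cases n
  · simp at hsum
  · simp only [Fin.sum_univ_one] at hsum hy
    rw [hsum, one_smul] at hy
    have := (hz 0).2
    rw [hy, norm_zero] at this
    linarith
  · simp only [Fin.sum_univ_two] at hsum hy
    have hdet : det2 (z 0) (z 1) = 0 := by
      have : w 1 * det2 (z 0) (z 1) = det2 (z 0) (w 0 • z 0 + w 1 • z 1) := by
        simp [det2]; ring
      rw [hy] at this
      have h2 : det2 (z 0) 0 = 0 := by simp [det2]
      rw [h2] at this
      exact (mul_eq_zero.1 this).resolve_left (hw 1).ne'
    have hz1 : z 1 = - z 0 := by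
      rcases par2 (hz 0).2 (hz 1).2 hdet with h | h
      · exact absurd (hinj h) (by decide)
      · exact h
    obtain ⟨p, hp⟩ : ∃ p, p = z 0 := ⟨_, rfl⟩
    have hpK := (hz 0).1
    have hpR := (hz 0).2
    have hpK' := (hz 1).1
    have hpR' := (hz 1).2
    rw [hz1] at hpK' hpR'
    rw [← hp] at hpK hpR hpK' hpR'
    have hpn : p ≠ 0 := by
      intro h; rw [h, norm_zero] at hpR; linarith
    have hp2 := normeq2 hpR
    constructor
    · obtain ⟨ζ, hζK, hζ⟩ := nondeg hKint p hpn 0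
      rw [sub_zero] at hζ
      -- the perpendicular component
      obtain ⟨ν, hν⟩ : ∃ ν : E2, ν = ζ + (-((p 0 * ζ 0 + p 1 * ζ 1) / R ^ 2)) • p := ⟨_, rfl⟩
      have horth : p 0 * ν 0 + p 1 * ν 1 = 0 := by
        rw [hν]
        simp
        have : p 0 * (ζ 0 + -((p 0 * ζ 0 + p 1 * ζ 1) / R ^ 2 * p 0)) +
          p 1 * (ζ 1 + -((p 0 * ζ 0 + p 1 * ζ 1) / R ^ 2 * p 1)) =
          (p 0 * ζ 0 + p 1 * ζ 1) - (p 0 * ζ 0 + p 1 * ζ 1) / R ^ 2 * (p 0 ^ 2 + p 1 ^ 2) := by ring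
        rw [this, hp2]
        field_simp
        ring
      have hdν : det2 p ν ≠ 0 := by
        have : det2 p ν = det2 p ζ := by rw [hν]; simp [det2]; ring
        rwa [this]
      have hνG : GG K 0 ν := by
        rw [hν]
        rcases le_total 0 (-((p 0 * ζ 0 + p 1 * ζ 1) / R ^ 2)) with h | h
        · simpa using GG_comb hK h0 (GGK ζ hζK) (GGK p hpK) zero_le_one h
        · simpa using GG_comb hK h0 (GGK ζ hζK) (GGK _ hpK') zero_le_one (neg_nonneg.2 h)
      have hν0 : ν ≠ 0 := by
        intro h; apply hdν; rw [h]; simp [det2]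
      have hνpos : 0 < ‖ν‖ := norm_pos_iff.2 hν0
      obtain ⟨η, hη, hηK⟩ := hνG
      obtain ⟨e, he⟩ : ∃ e, e = min η (δ' / (2 * ‖ν‖)) := ⟨_, rfl⟩
      have hepos : 0 < e := by rw [he]; exact lt_min hη (by positivity)
      have heK : (0 : E2) + e • ν ∈ K := mono_mem hK h0 hepos.le (by rw [he]; exact min_le_left _ _) hηK
      rw [zero_add] at heK
      obtain ⟨x, ⟨hxK, hxR⟩, hxν⟩ := hcov _ heK (by
        rw [norm_smul, Real.norm_of_nonneg hepos.le]
        calc e * ‖ν‖ ≤ δ' / (2 * ‖ν‖) * ‖ν‖ := by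
              gcongr; rw [he]; exact min_le_right _ _
          _ = δ' / 2 := by field_simp
          _ < δ' := by linarith)
      have hxν' := hle _ hxν
      have hsq : ‖x + e • ν‖ ^ 2 ≤ R ^ 2 := by gcongr
      rw [normsq2] at hsq
      have hx2 := normeq2 hxR
      have hν2 := normsq2 ν
      simp only [PiLp.add_apply, PiLp.smul_apply, smul_eq_mul] at hsq
      have hneg : x 0 * ν 0 + x 1 * ν 1 < 0 := by
        have h5 : e * (2 * (x 0 * ν 0 + x 1 * ν 1) + e * ‖ν‖ ^ 2) ≤ e * 0 := by
          rw [hν2]; linarith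
        have h6 := le_of_mul_le_mul_left h5 hepos
        have : 0 < e * ‖ν‖ ^ 2 := by positivity
        linarith
      obtain ⟨α, β, hxab⟩ : ∃ α β : ℝ, x = α • p + β • ν := ⟨_, _, cramer2 p ν x hdν⟩
      have hβ : β < 0 := by
        have e0 : x 0 = α * p 0 + β * ν 0 := by rw [hxab]; simp
        have e1 : x 1 = α * p 1 + β * ν 1 := by rw [hxab]; simp
        have : x 0 * ν 0 + x 1 * ν 1 = β * ‖ν‖ ^ 2 := by
          rw [e0, e1, hν2]; linear_combination α * horth
        rw [this] at hneg
        by_contra hn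
        push Not at hn
        have : 0 ≤ β * ‖ν‖ ^ 2 := by positivity
        linarith
      have hG' : GG K 0 (-ν) := by
        have hc : 0 ≤ 1 / (-β) := by
          apply div_nonneg zero_le_one; linarith
        have e : -ν = (1 / (-β)) • x + (α / β) • p := by
          rw [hxab]
          ext i
          simp
          have := hβ.ne
          field_simp
          ring
        rw [e]
        rcases le_total 0 (α / β) with h | h
        · exact GG_comb hK h0 (GGK x hxK) (GGK p hpK) hc h
        · simpa using GG_comb hK h0 (GGK x hxK) (GGK _ hpK') hc (neg_nonneg.2 h)
      intro y
      rw [cramer2 p ν y hdν]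
      exact GG_pm hK h0 (GGK p hpK) (GGK _ hpK') ⟨η, hη, hηK⟩ hG' _ _
    · refine ⟨{p, -p}, (Finset.card_le_two).trans (by norm_num), ?_, ?_⟩
      · intro x hx
        simp only [Finset.mem_insert, Finset.mem_singleton] at hx
        rcases hx with rfl | rfl
        · exact ⟨hpK, hpR⟩
        · exact ⟨hpK', hpR'⟩
      · intro x hx
        refine ⟨p, by simp, -p, by simp, ?_⟩
        have := normeq2 hx
        simp only [PiLp.neg_apply]
        nlinarith
  · simp only [Fin.sum_univ_three] at hsum hy
    have hdet : det2 (z 0) (z 1) ≠ 0 := by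
      intro hd
      have : w 1 * det2 (z 0) (z 1) + w 2 * det2 (z 0) (z 2)
          = det2 (z 0) (w 0 • z 0 + w 1 • z 1 + w 2 • z 2) := by
        simp [det2]; ring
      have h2 : det2 (z 0) 0 = 0 := by simp [det2]
      rw [hy, hd, h2, mul_zero, zero_add] at this
      have hd2 := (mul_eq_zero.1 this).resolve_left (hw 2).ne'
      have i1 : z 1 = - z 0 := (par2 (hz 0).2 (hz 1).2 hd).resolve_left
        fun h => absurd (hinj h) (by decide)
      have i2 : z 2 = - z 0 := (par2 (hz 0).2 (hz 2).2 hd2).resolve_left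
        fun h => absurd (hinj h) (by decide)
      exact absurd (hinj (i1.trans i2.symm)) (by decide)
    have hcone := cone3 (hw 0) (hw 1) (hw 2) hy hdet
    constructor
    · intro y
      obtain ⟨a, b, ha, hb, h | h | h⟩ := hcone y <;> rw [h] <;>
        exact GG_comb hK h0 (GGK _ (hz _).1) (GGK _ (hz _).1) ha hb
    · refine ⟨{z 0, z 1, z 2}, Finset.card_le_three, ?_, ?_⟩
      · intro x hx
        simp only [Finset.mem_insert, Finset.mem_singleton] at hx
        rcases hx with rfl | rfl | rfl <;> exact hz _
      · intro x hx
        obtain ⟨a, b, ha, hb, h | h | h⟩ := hcone x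
        · exact ⟨z 0, by simp, z 1, by simp, pair_angle hR hx (hz _).2 (hz _).2 ha hb h⟩
        · exact ⟨z 1, by simp, z 2, by simp, pair_angle hR hx (hz _).2 (hz _).2 ha hb h⟩
        · exact ⟨z 0, by simp, z 2, by simp, pair_angle hR hx (hz _).2 (hz _).2 ha hb h⟩

lemma norm_pp_le {d d' : E2} (hd : ‖d‖ ≤ 1) (hd' : ‖d'‖ ≤ 1) {s : ℝ} (hs : s ∈ Icc (0:ℝ) 1) :
    ‖pp d d' s‖ ≤ 1 := by
  have h := norm_add_le ((1 - s) • d) (s • d')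
  rw [norm_smul, norm_smul, Real.norm_of_nonneg hs.1, Real.norm_of_nonneg (by linarith [hs.2])] at h
  have h1 : (1 - s) * ‖d‖ ≤ (1 - s) * 1 := mul_le_mul_of_nonneg_left hd (by linarith [hs.2])
  have h2 : s * ‖d'‖ ≤ s * 1 := mul_le_mul_of_nonneg_left hd' hs.1
  unfold pp
  linarith

lemma quad_final {K : Set E2} {R : ℝ} (hKc : IsCompact K) (hK : Convex ℝ K)
    (N : ∀ u : E2, u ≠ 0 → ∀ x, ∃ z ∈ K, det2 u (z - x) ≠ 0) {δ' : ℝ} (hδ' : 0 < δ')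
    (hcov : ∀ y ∈ K, ‖y‖ < δ' → ∃ x, (x ∈ K ∧ ‖x‖ = R) ∧ x + y ∈ K)
    (h0 : (0 : E2) ∈ K) (hG : ∀ y, GG K 0 y) (C : Set E2)
    (hC : ∀ x, x ∈ K → ‖x‖ = R → x ∈ C ∨
      ((GG K x ea ∨ GG K x (-ea)) ∨ (GG K x eb ∨ GG K x (-eb))))
    (d d' : E2) (hd : d = ea ∨ d = -ea) (hd' : d' = eb ∨ d' = -eb) :
    ∃ y, (y ∈ K ∧ ‖y‖ = R) ∧ ∃ z, (z ∈ K ∧ ‖z‖ = R) ∧ ∃ δ > (0:ℝ), ∀ a b : ℝ, 0 ≤ a → 0 ≤ b →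
      a + b ≤ δ → ∃ x, (x = y ∨ x = z ∨ x ∈ C) ∧ x + (a • d + b • d') ∈ K := by
  have nd : ‖d‖ ≤ 1 := by
    have : ‖d‖ ^ 2 = 1 := by rw [normsq2]; rcases hd with rfl | rfl <;> simp
    nlinarith [norm_nonneg d]
  have nd' : ‖d'‖ ≤ 1 := by
    have : ‖d'‖ ^ 2 = 1 := by rw [normsq2]; rcases hd' with rfl | rfl <;> simp
    nlinarith [norm_nonneg d']
  have hD : det2 d d' ≠ 0 := by
    rcases hd with rfl | rfl <;> rcases hd' with rfl | rfl <;> simp [det2]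
  have hS : IsCompact {x : E2 | x ∈ K ∧ ‖x‖ = R} :=
    hKc.inter_right (isClosed_eq continuous_norm continuous_const)
  obtain ⟨t0, ht0, hrange⟩ := GG_range (d := d) (d' := d') (a := 0) (b := 1) hK h0 (hG _) (hG _)
  obtain ⟨t, ht⟩ : ∃ t, t = min t0 (δ' / 2) := ⟨_, rfl⟩
  have htpos : 0 < t := by rw [ht]; exact lt_min ht0 (by linarith)
  have hcov' : ∀ s ∈ Icc (0:ℝ) 1, ∃ x ∈ {x : E2 | x ∈ K ∧ ‖x‖ = R}, x + t • pp d d' s ∈ K := by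
    intro s hs
    have h1 := mono_mem hK h0 htpos.le (by rw [ht]; exact min_le_left _ _) (hrange s hs)
    rw [zero_add] at h1
    refine hcov _ h1 ?_
    rw [norm_smul, Real.norm_of_nonneg htpos.le]
    have h2 := mul_le_mul_of_nonneg_left (norm_pp_le nd nd' hs) htpos.le
    have h3 : t ≤ δ' / 2 := by rw [ht]; exact min_le_right _ _
    linarith
  have hSne : {x : E2 | x ∈ K ∧ ‖x‖ = R}.Nonempty := by
    obtain ⟨x, hx, -⟩ := hcov' 0 (by simp)
    exact ⟨x, hx⟩
  obtain ⟨y, hy, z, hz, δ, hδ, hc⟩ := quad hKc hK hS (fun x hx => hx.1) C N hD htpos (by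
    intro x hx s hs hxs
    rcases hC x hx.1 hx.2 with h | h
    · exact Or.inl h
    · refine Or.inr (quad_dir hK hx.1 hs ⟨t, htpos, hxs⟩ ?_)
      rcases hd with rfl | rfl <;> rcases hd' with rfl | rfl <;> try simp only [neg_neg]
      all_goals tauto)
    hcov' hSne
  refine ⟨y, hy, z, hz, δ, hδ, fun a b ha hb hab => ?_⟩
  rcases eq_or_lt_of_le (add_nonneg ha hb) with h | h
  · have ha0 : a = 0 := by linarith
    have hb0 : b = 0 := by linarith
    exact ⟨y, Or.inl rfl, by rw [ha0, hb0]; simpa using hy.1⟩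
  · have hs : b / (a + b) ∈ Icc (0:ℝ) 1 := ⟨by positivity, by rw [div_le_one h]; linarith⟩
    have e : a • d + b • d' = (a + b) • pp d d' (b / (a + b)) := by
      have := h.ne'
      ext i
      simp [pp]
      field_simp
      ring
    rw [e]
    rcases hc _ hs with h1 | h1 | ⟨x, hxC, hxS, h1⟩
    · exact ⟨y, Or.inl rfl, mono_mem hK hy.1 h.le hab h1⟩
    · exact ⟨z, Or.inr (Or.inl rfl), mono_mem hK hz.1 h.le hab h1⟩
    · exact ⟨x, Or.inr (Or.inr hxC), mono_mem hK hxS.1 h.le hab h1⟩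

open Classical in
lemma core {K : Set E2} {R : ℝ} (hKc : IsCompact K) (hK : Convex ℝ K)
    (hKint : (interior K).Nonempty)
    (hcirc : IsCircumball K 0 R) {δ' : ℝ} (hδ' : 0 < δ')
    (hcov : ∀ y ∈ K, ‖y‖ < δ' → ∃ x, (x ∈ K ∧ ‖x‖ = R) ∧ x + y ∈ K) :
    ∃ F : Finset E2, F.card ≤ 12 ∧ (∀ x ∈ F, x ∈ K ∧ ‖x‖ = R) ∧ ∃ δ > (0:ℝ), ∀ y : E2, ‖y‖ < δ →
      ∃ x ∈ F, x + y ∈ K := by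
  have N := nondeg hKint
  have hR : 0 < R := by
    obtain ⟨z, hz, hd⟩ := N ea (by intro h; have := congrArg (fun v : E2 => v 0) h; simp at this) 0
    have h1 : ‖z‖ ≤ R := by simpa using hcirc.1 hz
    have : z ≠ 0 := by
      intro h; apply hd; rw [h]; simp [det2]
    exact (norm_pos_iff.2 this).trans_le h1
  obtain ⟨h0, hG, C, hcard, hCS, hang⟩ := exists_C hKc hK hKint hR hcirc hδ' hcov
  have hC : ∀ x, x ∈ K → ‖x‖ = R → x ∈ (C : Set E2) ∨
      ((GG K x ea ∨ GG K x (-ea)) ∨ (GG K x eb ∨ GG K x (-eb))) := by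
    intro x hxK hxR
    by_cases hxC : x ∈ C
    · exact Or.inl hxC
    right
    obtain ⟨y, hy, z, hz, h⟩ := hang x hxR
    have hyx : y ≠ x := by rintro rfl; exact hxC hy
    have hzx : z ≠ x := by rintro rfl; exact hxC hz
    exact axis_dir hK hxK ⟨1, one_pos, by simpa using (hCS y hy).1⟩
      ⟨1, one_pos, by simpa using (hCS z hz).1⟩ (by simpa using h)
      (chord hxR (hCS y hy).2 (hCS z hz).2 hyx hzx h)
  have Q := quad_final hKc hK N hδ' hcov h0 hG C hC
  obtain ⟨y1, hy1, z1, hz1, δ1, hδ1, q1⟩ := Q ea eb (Or.inl rfl) (Or.inl rfl)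
  obtain ⟨y2, hy2, z2, hz2, δ2, hδ2, q2⟩ := Q ea (-eb) (Or.inl rfl) (Or.inr rfl)
  obtain ⟨y3, hy3, z3, hz3, δ3, hδ3, q3⟩ := Q (-ea) eb (Or.inr rfl) (Or.inl rfl)
  obtain ⟨y4, hy4, z4, hz4, δ4, hδ4, q4⟩ := Q (-ea) (-eb) (Or.inr rfl) (Or.inr rfl)
  refine ⟨C ∪ ([y1, z1, y2, z2, y3, z3, y4, z4] : List E2).toFinset, ?_, ?_,
    min (min δ1 δ2) (min δ3 δ4) / 2, by positivity, ?_⟩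
  · have h1 := Finset.card_union_le C ([y1, z1, y2, z2, y3, z3, y4, z4] : List E2).toFinset
    have h2 := List.toFinset_card_le ([y1, z1, y2, z2, y3, z3, y4, z4] : List E2)
    simp only [List.length_cons, List.length_nil] at h2
    omega
  · intro x hx
    rw [Finset.mem_union, List.mem_toFinset] at hx
    simp only [List.mem_cons, List.not_mem_nil, or_false] at hx
    rcases hx with h | rfl | rfl | rfl | rfl | rfl | rfl | rfl | rfl
    · exact hCS x h
    all_goals assumption
  · intro y hy
    have ey : y = y 0 • ea + y 1 • eb := by
      ext i; fin_cases i <;> simp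
    have b0 : |y 0| ≤ ‖y‖ := by
      refine abs_le_of_sq_le_sq ?_ (norm_nonneg y)
      rw [normsq2]; nlinarith [sq_nonneg (y 1)]
    have b1 : |y 1| ≤ ‖y‖ := by
      refine abs_le_of_sq_le_sq ?_ (norm_nonneg y)
      rw [normsq2]; nlinarith [sq_nonneg (y 0)]
    have m1 : min (min δ1 δ2) (min δ3 δ4) ≤ δ1 := (min_le_left _ _).trans (min_le_left _ _)
    have m2 : min (min δ1 δ2) (min δ3 δ4) ≤ δ2 := (min_le_left _ _).trans (min_le_right _ _)
    have m3 : min (min δ1 δ2) (min δ3 δ4) ≤ δ3 := (min_le_right _ _).trans (min_le_left _ _)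
    have m4 : min (min δ1 δ2) (min δ3 δ4) ≤ δ4 := (min_le_right _ _).trans (min_le_right _ _)
    have hsum : |y 0| + |y 1| ≤ min (min δ1 δ2) (min δ3 δ4) := by linarith
    rcases le_total 0 (y 0) with s0 | s0 <;> rcases le_total 0 (y 1) with s1 | s1
    · rw [abs_of_nonneg s0, abs_of_nonneg s1] at hsum
      obtain ⟨x, hx, h⟩ := q1 _ _ s0 s1 (by linarith)
      refine ⟨x, ?_, by rw [ey]; exact h⟩
      rcases hx with rfl | rfl | hx
      · simp
      · simp
      · exact Finset.mem_union_left _ hx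
    · rw [abs_of_nonneg s0, abs_of_nonpos s1] at hsum
      obtain ⟨x, hx, h⟩ := q2 _ (-y 1) s0 (by linarith) (by linarith)
      refine ⟨x, ?_, by rw [ey]; rwa [neg_smul_neg] at h⟩
      rcases hx with rfl | rfl | hx
      · simp
      · simp
      · exact Finset.mem_union_left _ hx
    · rw [abs_of_nonpos s0, abs_of_nonneg s1] at hsum
      obtain ⟨x, hx, h⟩ := q3 (-y 0) _ (by linarith) s1 (by linarith)
      refine ⟨x, ?_, by rw [ey]; rwa [neg_smul_neg] at h⟩
      rcases hx with rfl | rfl | hx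
      · simp
      · simp
      · exact Finset.mem_union_left _ hx
    · rw [abs_of_nonpos s0, abs_of_nonpos s1] at hsum
      obtain ⟨x, hx, h⟩ := q4 (-y 0) (-y 1) (by linarith) (by linarith) (by linarith)
      refine ⟨x, ?_, by rw [ey]; rwa [neg_smul_neg, neg_smul_neg] at h⟩
      rcases hx with rfl | rfl | hx
      · simp
      · simp
      · exact Finset.mem_union_left _ hx

/-- Remark 3.2 (A): if for a two-dimensional convex body `K ⊆ ℝ²` the translates `K + (c - x)`,
`x ∈ K ∩ bd B(c,R)`, cover a neighborhood of `c` in `K`, then at most `12` such translates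
suffice to cover a full neighborhood of `c`. -/
theorem cover_with_at_most_twelve_translates (K : Set (EuclideanSpace ℝ (Fin 2)))
    (hKc : IsCompact K) (hKconv : Convex ℝ K) (hKint : (interior K).Nonempty)
    (c : EuclideanSpace ℝ (Fin 2)) (R : ℝ) (hcirc : IsCircumball K c R)
    (δ' : ℝ) (hδ' : 0 < δ')
    (hcov : K ∩ ball c δ' ⊆ ⋃ x ∈ K ∩ sphere c R, (· + (c - x)) '' K) :
    ∃ (k : ℕ) (x : Fin k → EuclideanSpace ℝ (Fin 2)), k ≤ 12 ∧
      (∀ i, x i ∈ K ∩ sphere c R) ∧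
      ∃ δ : ℝ, 0 < δ ∧ ball c δ ⊆ ⋃ i, (· + (c - x i)) '' K := by
  obtain ⟨F, hcard, hFS, δ, hδ, hF⟩ := core (K := (fun y => y + c) ⁻¹' K) (R := R) (δ' := δ')
    ((Homeomorph.addRight c).isCompact_preimage.2 hKc) (hKconv.translate_preimage_left c)
    (by
      obtain ⟨z, hz⟩ := hKint
      refine ⟨z - c, ?_⟩
      have h := preimage_interior_subset_interior_preimage
        (f := fun y : EuclideanSpace ℝ (Fin 2) => y + c) (t := K) (by fun_prop)
      exact h (by simpa using hz))
    ⟨fun y hy => by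
        have := hcirc.1 hy
        simpa [mem_closedBall, dist_eq_norm] using this,
      fun c' R' h => hcirc.2 (c' + c) R' fun y hy => by
        have := h (a := y - c) (by simpa using hy)
        rw [mem_closedBall, dist_eq_norm] at this ⊢
        rwa [sub_sub, add_comm c] at this⟩
    hδ' (by
      intro y hy hyn
      have := hcov (a := y + c) ⟨hy, by simpa [mem_ball, dist_eq_norm] using hyn⟩
      simp only [mem_iUnion] at this
      obtain ⟨x, ⟨hxK, hxR⟩, k, hk, hkx⟩ := this
      refine ⟨x - c, ⟨by simpa using hxK, by rwa [mem_sphere, dist_eq_norm] at hxR⟩, ?_⟩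
      have e : x - c + y + c = k := by
        simp only at hkx
        have : y = k + (c - x) - c := by rw [hkx]; simp
        rw [this]; abel
      show x - c + y + c ∈ K
      rwa [e])
  refine ⟨F.card, fun i => (F.equivFin.symm i : EuclideanSpace ℝ (Fin 2)) + c, hcard, ?_, δ, hδ, ?_⟩
  · intro i
    have := hFS _ (F.equivFin.symm i).2
    exact ⟨this.1, by rw [mem_sphere, dist_eq_norm]; simpa using this.2⟩
  · intro y hy
    rw [mem_ball, dist_eq_norm] at hy
    obtain ⟨x, hx, h⟩ := hF _ hy
    refine mem_iUnion.2 ⟨F.equivFin ⟨x, hx⟩, x + (y - c) + c, h, ?_⟩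
    simp
    abel
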